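/- arXiv:1304.4042 — 3 statements merged into one kernel-verified Lean document; each statement's English description precedes it below -/
import Mathlib

section
/- Let r be a real number with 0 ≤ r < 1, and let μ be a locally constant distribution on ℤ_p with growth bounded by r, i.e. there exists C ∈ ℝ such that v_p(μ(1_{a + p^m ℤ_p})) ≥ C − r·m for all integers m ≥ 0 and all a ∈ ℤ_p. Then there exists a unique continuous E-linear functional μ̃ : C^r(ℤ_p, E) → E whose restriction to LC(ℤ_p, E) equals μ. -/
open Filter Topology

/-- `p^{-ε_m(f)}`: the supremum of `‖f (x+y) - f x‖` over `x ∈ ℤ_p` and `y ∈ p^m ℤ_p`. -/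
noncomputable def supDiff1 {p : ℕ} [Fact p.Prime] (E : Type*) [NormedField E]
    (f : ℤ_[p] → E) (m : ℕ) : ℝ :=
  ⨆ x : ℤ_[p], ⨆ z : ℤ_[p], ‖f (x + (p : ℤ_[p]) ^ m * z) - f x‖

/-- `f ∈ C^r(ℤ_p, E)`: `f` is continuous and `ε_m(f) - r·m → ∞` as `m → ∞`. -/
def MemCr1 {p : ℕ} [Fact p.Prime] (E : Type*) [NormedField E] (r : ℝ) (f : ℤ_[p] → E) : Prop :=
  Continuous f ∧
    Tendsto (fun m : ℕ => supDiff1 E f m * (p : ℝ) ^ (r * (m : ℝ))) atTop (nhds 0)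

/-- The norm `‖f‖_{C^r} = p^{-v_{C^r}(f)}`. -/
noncomputable def CrNorm1 {p : ℕ} [Fact p.Prime] (E : Type*) [NormedField E] (r : ℝ)
    (f : ℤ_[p] → E) : ℝ :=
  max (⨆ x : ℤ_[p], ‖f x‖) (⨆ m : ℕ, supDiff1 E f m * (p : ℝ) ^ (r * (m : ℝ)))

/-- `Φ` is a continuous `E`-linear functional on `C^r(ℤ_p, E)` extending the locally
constant distribution `μ`: it agrees with `μ` on locally constant functions, is `E`-linear on
`C^r(ℤ_p, E)`, and is bounded with respect to the norm of `C^r(ℤ_p, E)`. -/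
def IsCrExtension {p : ℕ} [Fact p.Prime] (E : Type*) [NormedField E] (r : ℝ)
    (μ : LocallyConstant ℤ_[p] E →ₗ[E] E) (Φ : (ℤ_[p] → E) → E) : Prop :=
  (∀ g : LocallyConstant ℤ_[p] E, Φ ⇑g = μ g) ∧
  (∀ f g : ℤ_[p] → E, MemCr1 E r f → MemCr1 E r g → Φ (f + g) = Φ f + Φ g) ∧
  (∀ (c : E) (f : ℤ_[p] → E), MemCr1 E r f → Φ (c • f) = c • Φ f) ∧
  (∃ K : ℝ, ∀ f : ℤ_[p] → E, MemCr1 E r f → ‖Φ f‖ ≤ K * CrNorm1 E r f)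

section helpers
variable {p : ℕ} [Fact p.Prime] {E : Type*} [NormedField E]

lemma crx_tz_eq (m : ℕ) (x y : ℤ_[p]) :
    PadicInt.toZModPow m x = PadicInt.toZModPow m y ↔ ∃ z, x = y + (p : ℤ_[p]) ^ m * z := by
  rw [← sub_eq_zero, ← map_sub, ← RingHom.mem_ker, PadicInt.ker_toZModPow,
    Ideal.mem_span_singleton]
  constructor
  · rintro ⟨z, hz⟩
    exact ⟨z, by rw [← hz]; ring⟩
  · rintro ⟨z, hz⟩
    exact ⟨z, by rw [hz]; ring⟩

lemma crx_tz_lc (m : ℕ) : IsLocallyConstant (PadicInt.toZModPow (p := p) m) := by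
  rw [IsLocallyConstant.iff_eventually_eq]
  intro x
  have hp : (0 : ℝ) < p := by exact_mod_cast (Fact.out : p.Prime).pos
  have : (0 : ℝ) < (p : ℝ) ^ (-m : ℤ) := by positivity
  filter_upwards [Metric.ball_mem_nhds x this] with y hy
  rw [Metric.mem_ball, dist_eq_norm] at hy
  have := (PadicInt.norm_le_pow_iff_mem_span_pow (y - x) m).1 hy.le
  rw [← PadicInt.ker_toZModPow, RingHom.mem_ker, map_sub, sub_eq_zero] at this
  exact this

/-- the locally constant step function -/
noncomputable def crxStep (f : ℤ_[p] → E) (m : ℕ) : LocallyConstant ℤ_[p] E where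
  toFun x := f ((PadicInt.toZModPow m x).val : ℕ)
  isLocallyConstant := (crx_tz_lc m).comp (fun a : ZMod (p ^ m) => f (a.val : ℕ))

noncomputable def crxInd (E : Type*) [NormedField E] (m : ℕ) (a : ZMod (p ^ m)) :
    LocallyConstant ℤ_[p] E where
  toFun x := if PadicInt.toZModPow m x = a then 1 else 0
  isLocallyConstant := (crx_tz_lc m).comp (fun b : ZMod (p ^ m) => if b = a then (1 : E) else 0)

lemma crxStep_apply (f : ℤ_[p] → E) (m : ℕ) (x : ℤ_[p]) :
    crxStep f m x = f ((PadicInt.toZModPow m x).val : ℕ) := rfl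

lemma crx_rep (m : ℕ) (a : ZMod (p ^ m)) : PadicInt.toZModPow (p := p) m (a.val : ℕ) = a := by
  have : NeZero (p ^ m) := ⟨pow_ne_zero _ (Fact.out : p.Prime).ne_zero⟩
  simp

lemma crx_rep_sub (m : ℕ) (x : ℤ_[p]) :
    ∃ z, (((PadicInt.toZModPow m x).val : ℕ) : ℤ_[p]) = x + (p : ℤ_[p]) ^ m * z := by
  rw [← crx_tz_eq, crx_rep]

lemma crxStep_add_pow (f : ℤ_[p] → E) {m k : ℕ} (h : m ≤ k) (x z : ℤ_[p]) :
    crxStep f m (x + (p : ℤ_[p]) ^ k * z) = crxStep f m x := by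
  rw [crxStep_apply, crxStep_apply]
  have : PadicInt.toZModPow m (x + (p : ℤ_[p]) ^ k * z) = PadicInt.toZModPow m x := by
    rw [crx_tz_eq]
    exact ⟨(p : ℤ_[p]) ^ (k - m) * z, by rw [← mul_assoc, ← pow_add]; congr 4; omega⟩
  rw [this]

lemma crx_bdd {f : ℤ_[p] → E} (hf : Continuous f) : ∃ B, ∀ x, ‖f x‖ ≤ B := by
  obtain ⟨B, hB⟩ := (isCompact_range hf).isBounded.exists_norm_le
  exact ⟨B, fun x => hB _ ⟨x, rfl⟩⟩

lemma crx_le_supDiff {f : ℤ_[p] → E} (hf : Continuous f) (m : ℕ) (x z : ℤ_[p]) :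
    ‖f (x + (p : ℤ_[p]) ^ m * z) - f x‖ ≤ supDiff1 E f m := by
  obtain ⟨B, hB⟩ := crx_bdd hf
  have key : ∀ x z : ℤ_[p], ‖f (x + (p : ℤ_[p]) ^ m * z) - f x‖ ≤ B + B := fun x z =>
    (norm_sub_le _ _).trans (add_le_add (hB _) (hB _))
  have h1 : BddAbove (Set.range fun x : ℤ_[p] =>
      ⨆ z : ℤ_[p], ‖f (x + (p : ℤ_[p]) ^ m * z) - f x‖) := by
    refine ⟨B + B, ?_⟩
    rintro _ ⟨x, rfl⟩
    exact ciSup_le (key x)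
  have h2 : BddAbove (Set.range fun z : ℤ_[p] => ‖f (x + (p : ℤ_[p]) ^ m * z) - f x‖) := by
    refine ⟨B + B, ?_⟩
    rintro _ ⟨z, rfl⟩
    exact key x z
  exact (le_ciSup h2 z).trans (le_ciSup h1 x)

lemma crx_supDiff_le {f : ℤ_[p] → E} {m : ℕ} {B : ℝ}
    (h : ∀ x z : ℤ_[p], ‖f (x + (p : ℤ_[p]) ^ m * z) - f x‖ ≤ B) : supDiff1 E f m ≤ B :=
  ciSup_le fun x => ciSup_le (h x)

lemma crx_supDiff_nonneg (f : ℤ_[p] → E) (m : ℕ) : 0 ≤ supDiff1 E f m :=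
  Real.iSup_nonneg fun _ => Real.iSup_nonneg fun _ => norm_nonneg _

lemma crx_lc_eq_step (g : LocallyConstant ℤ_[p] E) : ∃ M, ∀ m, M ≤ m → crxStep g m = g := by
  have hu : UniformContinuous g := CompactSpace.uniformContinuous_of_continuous g.continuous
  have hfin : (Set.range g).Finite := g.range_finite
  -- use a Lebesgue-number argument
  obtain ⟨δ, hδ, H⟩ := lebesgue_number_lemma_of_metric (s := (Set.univ : Set ℤ_[p]))
    (c := fun e : E => g ⁻¹' {e}) isCompact_univ (fun e => g.isLocallyConstant.isOpen_fiber e)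
    (fun x _ => Set.mem_iUnion.2 ⟨g x, rfl⟩)
  obtain ⟨M, hM⟩ := PadicInt.exists_pow_neg_lt p hδ
  refine ⟨M, fun m hm => ?_⟩
  ext x
  rw [crxStep_apply]
  obtain ⟨z, hz⟩ := crx_rep_sub m x
  obtain ⟨e, he⟩ := H x trivial
  have h1 : g x = e := he (Metric.mem_ball_self hδ)
  rw [h1]
  refine he ?_
  rw [hz, Metric.mem_ball, dist_eq_norm, add_sub_cancel_left]
  refine lt_of_le_of_lt ?_ hM
  rw [PadicInt.norm_le_pow_iff_mem_span_pow, Ideal.mem_span_singleton]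
  exact (pow_dvd_pow _ hm).trans (dvd_mul_right _ _)

lemma crx_lc_supDiff (g : LocallyConstant ℤ_[p] E) : ∃ M, ∀ m, M ≤ m → supDiff1 E g m = 0 := by
  obtain ⟨M, hM⟩ := crx_lc_eq_step g
  refine ⟨M, fun m hm => le_antisymm (crx_supDiff_le fun x z => ?_) (crx_supDiff_nonneg _ _)⟩
  have := crxStep_add_pow g hm x z
  rw [hM M le_rfl] at this
  rw [this]; simp

lemma crx_lc_mem (r : ℝ) (g : LocallyConstant ℤ_[p] E) : MemCr1 E r g := by
  refine ⟨g.continuous, ?_⟩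
  obtain ⟨M, hM⟩ := crx_lc_supDiff g
  refine tendsto_const_nhds.congr' ?_
  filter_upwards [eventually_ge_atTop M] with m hm
  rw [hM m hm, zero_mul]

lemma crx_smul_mem (r : ℝ) (c : E) {f : ℤ_[p] → E} (hf : MemCr1 E r f) : MemCr1 E r (c • f) := by
  refine ⟨hf.1.const_smul c, ?_⟩
  have h := hf.2.const_mul ‖c‖
  rw [mul_zero] at h
  refine squeeze_zero (fun m => mul_nonneg (crx_supDiff_nonneg _ _) (by positivity)) (fun m => ?_) h
  rw [← mul_assoc]
  refine mul_le_mul_of_nonneg_right (crx_supDiff_le fun x z => ?_) (by positivity)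
  simp only [Pi.smul_apply, ← smul_sub, norm_smul]
  exact mul_le_mul_of_nonneg_left (crx_le_supDiff hf.1 m x z) (norm_nonneg _)

lemma crx_add_mem (r : ℝ) {f g : ℤ_[p] → E} (hf : MemCr1 E r f) (hg : MemCr1 E r g) :
    MemCr1 E r (f + g) := by
  refine ⟨hf.1.add hg.1, ?_⟩
  have h := hf.2.add hg.2
  rw [add_zero] at h
  refine squeeze_zero (fun m => mul_nonneg (crx_supDiff_nonneg _ _) (by positivity)) (fun m => ?_) h
  rw [← add_mul]
  refine mul_le_mul_of_nonneg_right (crx_supDiff_le fun x z => ?_) (by positivity)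
  simp only [Pi.add_apply, add_sub_add_comm]
  exact (norm_add_le _ _).trans
    (add_le_add (crx_le_supDiff hf.1 m x z) (crx_le_supDiff hg.1 m x z))

lemma crx_level_bound [IsUltrametricDist E] (μ : LocallyConstant ℤ_[p] E →ₗ[E] E) (m : ℕ) (A B : ℝ)
    (hA : ∀ a : ZMod (p ^ m), ‖μ (crxInd E m a)‖ ≤ A) (h : LocallyConstant ℤ_[p] E)
    (hh : crxStep h m = h) (hB : ∀ x, ‖h x‖ ≤ B) : ‖μ h‖ ≤ B * A := by
  have : NeZero (p ^ m) := ⟨pow_ne_zero _ (Fact.out : p.Prime).ne_zero⟩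
  have hB0 : 0 ≤ B := (norm_nonneg _).trans (hB 0)
  have hA0 : 0 ≤ A := (norm_nonneg _).trans (hA 0)
  have e : h = ∑ a : ZMod (p ^ m), h ((a.val : ℕ) : ℤ_[p]) • crxInd E m a := by
    conv_lhs => rw [← hh]
    ext x
    rw [← LocallyConstant.evalₗ_apply (R := E) x (∑ a : ZMod (p ^ m), _), map_sum]
    simp [crxStep_apply, crxInd]
  rw [e, map_sum]
  refine IsUltrametricDist.norm_sum_le_of_forall_le_of_nonneg (mul_nonneg hB0 hA0) fun a _ => ?_
  rw [map_smul, norm_smul]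
  exact mul_le_mul (hB _) (hA a) (norm_nonneg _) hB0

lemma crx_step_step (f : ℤ_[p] → E) {m k : ℕ} (h : m ≤ k) :
    crxStep (crxStep f m) k = crxStep f m := by
  ext x
  rw [crxStep_apply (crxStep f m)]
  obtain ⟨z, hz⟩ := crx_rep_sub k x
  rw [hz, crxStep_add_pow f h]

lemma crx_step_add (f g : ℤ_[p] → E) (m : ℕ) : crxStep (f + g) m = crxStep f m + crxStep g m := rfl
lemma crx_step_smul (c : E) (g : ℤ_[p] → E) (m : ℕ) : crxStep (c • g) m = c • crxStep g m := rfl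
lemma crx_step_sub (f g : ℤ_[p] → E) (m : ℕ) : crxStep (f - g) m = crxStep f m - crxStep g m := rfl

lemma crx_norm_le {f : ℤ_[p] → E} (hf : Continuous f) (r : ℝ) (x : ℤ_[p]) :
    ‖f x‖ ≤ CrNorm1 E r f := by
  obtain ⟨B, hB⟩ := crx_bdd hf
  exact (le_ciSup (f := fun x => ‖f x‖) ⟨B, by rintro _ ⟨x, rfl⟩; exact hB x⟩ x).trans
    (le_max_left _ _)

lemma crx_sd_le {r : ℝ} {f : ℤ_[p] → E} (hf : MemCr1 E r f) (m : ℕ) :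
    supDiff1 E f m * (p : ℝ) ^ (r * (m : ℝ)) ≤ CrNorm1 E r f :=
  (le_ciSup hf.2.bddAbove_range m).trans (le_max_right _ _)

lemma crx_diff_norm {f : ℤ_[p] → E} (hf : Continuous f) (m : ℕ) (x : ℤ_[p]) :
    ‖crxStep f m x - f x‖ ≤ supDiff1 E f m := by
  rw [crxStep_apply]
  obtain ⟨z, hz⟩ := crx_rep_sub m x
  rw [hz]
  exact crx_le_supDiff hf m x z

lemma crx_succ_norm {f : ℤ_[p] → E} (hf : Continuous f) (m : ℕ) (x : ℤ_[p]) :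
    ‖crxStep f (m + 1) x - crxStep f m x‖ ≤ supDiff1 E f m := by
  obtain ⟨z, hz⟩ := crx_rep_sub (m + 1) x
  have := crx_diff_norm hf m (x + (p : ℤ_[p]) ^ (m + 1) * z)
  rwa [crxStep_add_pow f (Nat.le_succ m), ← hz, norm_sub_rev] at this

end helpers

theorem stmt1 (p : ℕ) [Fact p.Prime] (E : Type*) [NormedField E] [CompleteSpace E]
    [IsUltrametricDist E] [Algebra ℚ_[p] E] [FiniteDimensional ℚ_[p] E]
    (hE : ∀ x : ℚ_[p], ‖algebraMap ℚ_[p] E x‖ = ‖x‖)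
    (r : ℝ) (hr0 : 0 ≤ r) (hr1 : r < 1)
    (μ : LocallyConstant ℤ_[p] E →ₗ[E] E)
    (C : ℝ)
    (hgrowth : ∀ (m : ℕ) (a : ℤ_[p]) (g : LocallyConstant ℤ_[p] E),
      ⇑g = Set.indicator {x : ℤ_[p] | ∃ z : ℤ_[p], x = a + (p : ℤ_[p]) ^ m * z}
        (fun _ => (1 : E)) →
      ‖μ g‖ ≤ (p : ℝ) ^ (r * (m : ℝ) - C)) :
    ∃ Φ : (ℤ_[p] → E) → E, IsCrExtension E r μ Φ ∧
      ∀ Φ' : (ℤ_[p] → E) → E, IsCrExtension E r μ Φ' →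
        ∀ f : ℤ_[p] → E, MemCr1 E r f → Φ' f = Φ f := by
  have hp1 : (1 : ℝ) ≤ p := by exact_mod_cast (Fact.out : p.Prime).one_lt.le
  have hp : (0 : ℝ) < p := by linarith
  have hA : ∀ (m : ℕ) (a : ZMod (p ^ m)), ‖μ (crxInd E m a)‖ ≤ (p : ℝ) ^ (r * (m : ℝ) - C) := by
    intro m a
    refine hgrowth m ((a.val : ℕ) : ℤ_[p]) _ ?_
    ext x
    classical
    rw [Set.indicator_apply]
    simp only [Set.mem_setOf_eq, ← crx_tz_eq, crx_rep]
    show (if _ then _ else _) = _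
    congr
  -- bound on successive differences
  have hstep : ∀ f : ℤ_[p] → E, Continuous f → ∀ m : ℕ,
      ‖μ (crxStep f (m + 1)) - μ (crxStep f m)‖ ≤
        (p : ℝ) ^ (r - C) * (supDiff1 E f m * (p : ℝ) ^ (r * (m : ℝ))) := by
    intro f hf m
    rw [← map_sub]
    have := crx_level_bound μ (m + 1) _ (supDiff1 E f m) (hA (m + 1))
      (crxStep f (m + 1) - crxStep f m) (by
        have e := crx_step_sub (crxStep f (m + 1)) (crxStep f m) (m + 1)
        rw [crx_step_step f le_rfl, crx_step_step f (Nat.le_succ m)] at e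
        exact e) (crx_succ_norm hf m)
    refine this.trans (le_of_eq ?_)
    have : r * ((m + 1 : ℕ) : ℝ) - C = (r - C) + r * m := by push_cast; ring
    rw [this, Real.rpow_add hp]; ring
  have hlim : ∀ f : ℤ_[p] → E, MemCr1 E r f → ∃ L, Tendsto (fun m => μ (crxStep f m)) atTop (𝓝 L) := by
    intro f hf
    apply cauchySeq_tendsto_of_complete
    apply NonarchimedeanAddGroup.cauchySeq_of_tendsto_sub_nhds_zero
    have h := hf.2.const_mul ((p : ℝ) ^ (r - C))
    rw [mul_zero] at h
    exact squeeze_zero_norm (hstep f hf.1) h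
  have hΦ : ∀ f : ℤ_[p] → E, MemCr1 E r f → Tendsto (fun m => μ (crxStep f m)) atTop
      (𝓝 (limUnder atTop (fun m => μ (crxStep f m)))) := fun f hf =>
    tendsto_nhds_limUnder (hlim f hf)
  refine ⟨fun f => limUnder atTop (fun m => μ (crxStep f m)), ⟨?_, ?_, ?_, ?_⟩, ?_⟩
  · intro g
    refine Tendsto.limUnder_eq (tendsto_const_nhds.congr' ?_)
    obtain ⟨M, hM⟩ := crx_lc_eq_step g
    filter_upwards [eventually_ge_atTop M] with m hm
    rw [hM m hm]
  · intro f g hf hg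
    refine Tendsto.limUnder_eq ?_
    simp only [crx_step_add, map_add]
    exact (hΦ f hf).add (hΦ g hg)
  · intro c f hf
    refine Tendsto.limUnder_eq ?_
    simp only [crx_step_smul, map_smul]
    exact (hΦ f hf).const_smul c
  · refine ⟨max ((p : ℝ) ^ (-C)) ((p : ℝ) ^ (r - C)), fun f hf => ?_⟩
    have hN0 : 0 ≤ CrNorm1 E r f := (norm_nonneg _).trans (crx_norm_le hf.1 r 0)
    refine le_of_tendsto (hΦ f hf).norm (Eventually.of_forall fun m => ?_)
    induction m with
    | zero =>
      have := crx_level_bound μ 0 _ (CrNorm1 E r f) (hA 0) (crxStep f 0)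
        (crx_step_step f le_rfl) (fun x => crx_norm_le hf.1 r _)
      refine this.trans ?_
      rw [mul_comm]
      refine mul_le_mul_of_nonneg_right ?_ hN0
      simp
    | succ m ih =>
      have h1 : μ (crxStep f (m + 1)) =
        (μ (crxStep f (m + 1)) - μ (crxStep f m)) + μ (crxStep f m) := by ring
      rw [h1]
      refine (IsUltrametricDist.norm_add_le_max _ _).trans (max_le ?_ ih)
      exact (hstep f hf.1 m).trans (mul_le_mul (le_max_right _ _) (crx_sd_le hf m)
        (mul_nonneg (crx_supDiff_nonneg _ _) (by positivity)) (by positivity))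
  · rintro Φ' ⟨h1, h2, h3, K, hK⟩ f hf
    refine tendsto_nhds_unique ?_ (hΦ f hf)
    rw [tendsto_iff_norm_sub_tendsto_zero]
    have hmem : ∀ m : ℕ, MemCr1 E r ((-1 : E) • f) := fun _ => crx_smul_mem r _ hf
    have e : ∀ m, μ (crxStep f m) - Φ' f = Φ' (crxStep f m + (-1 : E) • f) := by
      intro m
      rw [h2 _ _ (crx_lc_mem r _) (hmem m), h1, h3 _ _ hf]
      simp [sub_eq_add_neg]
    simp only [e]
    have hd : ∀ m x, (⇑(crxStep f m) + (-1 : E) • f) x = crxStep f m x - f x := by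
      intro m x; simp [sub_eq_add_neg]
    have hCr : Tendsto (fun m => CrNorm1 E r (⇑(crxStep f m) + (-1 : E) • f)) atTop (𝓝 0) := by
      rw [Metric.tendsto_atTop]
      intro ε hε
      obtain ⟨M, hM⟩ := (Metric.tendsto_atTop.1 hf.2) (ε / 2) (half_pos hε)
      refine ⟨M, fun m hm => ?_⟩
      have hb : ∀ k, m ≤ k → supDiff1 E f k * (p : ℝ) ^ (r * (k : ℝ)) ≤ ε / 2 := by
        intro k hk
        have := hM k (hm.trans hk)
        rw [Real.dist_eq, sub_zero] at this
        exact (le_abs_self _).trans this.le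
      have hN0 : 0 ≤ CrNorm1 E r (⇑(crxStep f m) + (-1 : E) • f) :=
        (Real.iSup_nonneg fun _ => norm_nonneg _).trans (le_max_left _ _)
      rw [Real.dist_eq, sub_zero, abs_of_nonneg hN0]
      refine lt_of_le_of_lt ?_ (half_lt_self hε)
      refine max_le (ciSup_le fun x => ?_) (ciSup_le fun k => ?_)
      · rw [hd]
        refine (crx_diff_norm hf.1 m x).trans (le_trans ?_ (hb m le_rfl))
        exact le_mul_of_one_le_right (crx_supDiff_nonneg _ _)
          (Real.one_le_rpow hp1 (by positivity))
      · rcases le_total m k with hk | hk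
        · refine le_trans (mul_le_mul_of_nonneg_right (crx_supDiff_le fun x z => ?_)
            (by positivity)) (hb k hk)
          rw [hd, hd, crxStep_add_pow f hk, sub_sub_sub_cancel_left, norm_sub_rev]
          exact crx_le_supDiff hf.1 k x z
        · refine le_trans (mul_le_mul (crx_supDiff_le fun x z => ?_)
            (Real.rpow_le_rpow_of_exponent_le hp1 (mul_le_mul_of_nonneg_left
              (Nat.cast_le.2 hk) hr0)) (by positivity) (crx_supDiff_nonneg _ _)) (hb m le_rfl)
          rw [hd, hd, sub_eq_add_neg]
          refine (IsUltrametricDist.norm_add_le_max _ _).trans (max_le ?_ ?_)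
          · exact crx_diff_norm hf.1 m _
          · rw [norm_neg]; exact crx_diff_norm hf.1 m _
    have h := hCr.const_mul K
    rw [mul_zero] at h
    exact squeeze_zero (fun m => norm_nonneg _)
      (fun m => hK _ (crx_add_mem r (crx_lc_mem r _) (hmem m))) h
end

section
/- For every integer d ≥ 1 and every real number r ≥ 0, the space C^r(ℤ_p^d, E) is an E-Banach space: for every f ∈ C^r(ℤ_p^d, E) the valuation v_{C^r}(f) is finite (f ≠ 0) or +∞ (f = 0), ‖f‖_{C^r} = p^{−v_{C^r}(f)} is a non-archimedean norm on C^r(ℤ_p^d, E), and C^r(ℤ_p^d, E) is complete with respect to this norm. -/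
open Filter Topology

/-- `p^{-ε_m(f)}`: the supremum of `‖f (x+y) - f x‖` over `x ∈ ℤ_p^d` and `y ∈ p^m ℤ_p^d`. -/
noncomputable def supDiff {p : ℕ} [Fact p.Prime] (E : Type*) [NormedField E] {d : ℕ}
    (f : (Fin d → ℤ_[p]) → E) (m : ℕ) : ℝ :=
  ⨆ x : Fin d → ℤ_[p], ⨆ z : Fin d → ℤ_[p], ‖f (x + (p : ℤ_[p]) ^ m • z) - f x‖

/-- `f ∈ C^r(ℤ_p^d, E)`: `f` is continuous and `ε_m(f) - r·m → ∞` as `m → ∞`, expressed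
multiplicatively as `p^{-ε_m(f)} · p^{r·m} → 0`. -/
def MemCr {p : ℕ} [Fact p.Prime] (E : Type*) [NormedField E] {d : ℕ} (r : ℝ)
    (f : (Fin d → ℤ_[p]) → E) : Prop :=
  Continuous f ∧
    Tendsto (fun m : ℕ => supDiff E f m * (p : ℝ) ^ (r * (m : ℝ))) atTop (nhds 0)

/-- The norm `‖f‖_{C^r} = p^{-v_{C^r}(f)}` where
`v_{C^r}(f) = min(inf_x v_p(f x), inf_m (ε_m(f) - r·m))`. -/
noncomputable def CrNorm {p : ℕ} [Fact p.Prime] (E : Type*) [NormedField E] {d : ℕ} (r : ℝ)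
    (f : (Fin d → ℤ_[p]) → E) : ℝ :=
  max (⨆ x : Fin d → ℤ_[p], ‖f x‖) (⨆ m : ℕ, supDiff E f m * (p : ℝ) ^ (r * (m : ℝ)))


section helpers
variable {p : ℕ} [Fact p.Prime] {E : Type*} [NormedField E] {d : ℕ}

theorem bdd_of_cont {f : (Fin d → ℤ_[p]) → E} (hf : Continuous f) : ∃ B, ∀ x, ‖f x‖ ≤ B := by
  obtain ⟨B, hB⟩ := (isCompact_range hf.norm).bddAbove
  exact ⟨B, fun x => hB ⟨x, rfl⟩⟩

theorem supDiff_nonneg (f : (Fin d → ℤ_[p]) → E) (m : ℕ) : 0 ≤ supDiff E f m :=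
  Real.iSup_nonneg fun _ => Real.iSup_nonneg fun _ => norm_nonneg _

theorem supDiff_le {f : (Fin d → ℤ_[p]) → E} {m : ℕ} {C : ℝ} 
    (h : ∀ x z, ‖f (x + (p : ℤ_[p]) ^ m • z) - f x‖ ≤ C) : supDiff E f m ≤ C :=
  ciSup_le fun x => ciSup_le fun z => h x z

theorem le_supDiff {f : (Fin d → ℤ_[p]) → E} (hf : Continuous f) (m : ℕ) (x z) :
    ‖f (x + (p : ℤ_[p]) ^ m • z) - f x‖ ≤ supDiff E f m := by
  obtain ⟨B, hB⟩ := bdd_of_cont hf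
  have h : ∀ x z, ‖f (x + (p : ℤ_[p]) ^ m • z) - f x‖ ≤ B + B := fun x z =>
    (norm_sub_le _ _).trans (add_le_add (hB _) (hB _))
  have h1 : ‖f (x + (p : ℤ_[p]) ^ m • z) - f x‖ ≤
      ⨆ z : Fin d → ℤ_[p], ‖f (x + (p : ℤ_[p]) ^ m • z) - f x‖ :=
    le_ciSup (f := fun z : Fin d → ℤ_[p] => ‖f (x + (p : ℤ_[p]) ^ m • z) - f x‖)
      ⟨B + B, by rintro _ ⟨z, rfl⟩; exact h x z⟩ z
  refine h1.trans ?_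
  exact le_ciSup (f := fun x => ⨆ z : Fin d → ℤ_[p], ‖f (x + (p : ℤ_[p]) ^ m • z) - f x‖)
      ⟨B + B, by rintro _ ⟨x, rfl⟩; exact ciSup_le (h x)⟩ x

theorem norm_add_le_max' [IsUltrametricDist E] (a b : E) : ‖a + b‖ ≤ max ‖a‖ ‖b‖ :=
  IsUltrametricDist.norm_add_le_max a b

theorem supDiff_add [IsUltrametricDist E] {f g : (Fin d → ℤ_[p]) → E} (hf : Continuous f)
    (hg : Continuous g) (m : ℕ) :
    supDiff E (f + g) m ≤ max (supDiff E f m) (supDiff E g m) := by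
  refine supDiff_le fun x z => ?_
  have : (f + g) (x + (p : ℤ_[p]) ^ m • z) - (f + g) x =
    (f (x + (p : ℤ_[p]) ^ m • z) - f x) + (g (x + (p : ℤ_[p]) ^ m • z) - g x) := by
    simp only [Pi.add_apply]; ring
  rw [this]
  exact (norm_add_le_max' _ _).trans (max_le_max (le_supDiff hf m x z) (le_supDiff hg m x z))

theorem supDiff_smul (c : E) (f : (Fin d → ℤ_[p]) → E) (m : ℕ) :
    supDiff E (c • f) m = ‖c‖ * supDiff E f m := by
  unfold supDiff
  rw [Real.mul_iSup_of_nonneg (norm_nonneg c)]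
  congr 1; ext x
  rw [Real.mul_iSup_of_nonneg (norm_nonneg c)]
  congr 1; ext z
  rw [← norm_mul]; congr 1
  simp only [Pi.smul_apply, smul_eq_mul]; ring

theorem wt_nonneg (p : ℕ) (r : ℝ) (m : ℕ) : 0 ≤ (p : ℝ) ^ (r * (m : ℝ)) :=
  Real.rpow_nonneg (Nat.cast_nonneg _) _

theorem supDiff_add_wt [IsUltrametricDist E] {f g : (Fin d → ℤ_[p]) → E} (hf : Continuous f)
    (hg : Continuous g) (r : ℝ) (m : ℕ) :
    supDiff E (f + g) m * (p : ℝ) ^ (r * (m : ℝ)) ≤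
      max (supDiff E f m * (p : ℝ) ^ (r * (m : ℝ))) (supDiff E g m * (p : ℝ) ^ (r * (m : ℝ))) := by
  rw [← max_mul_of_nonneg _ _ (wt_nonneg p r m)]
  exact mul_le_mul_of_nonneg_right (supDiff_add hf hg m) (wt_nonneg p r m)

theorem MemCr.add' [IsUltrametricDist E] {r : ℝ} {f g : (Fin d → ℤ_[p]) → E} (hf : MemCr E r f)
    (hg : MemCr E r g) : MemCr E r (f + g) := by
  refine ⟨hf.1.add hg.1, ?_⟩
  have h := hf.2.max hg.2
  rw [max_self] at h
  exact squeeze_zero (fun m => mul_nonneg (supDiff_nonneg _ _) (wt_nonneg p r m))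
    (fun m => supDiff_add_wt hf.1 hg.1 r m) h

theorem MemCr.smul' {r : ℝ} {f : (Fin d → ℤ_[p]) → E} (c : E) (hf : MemCr E r f) :
    MemCr E r (c • f) := by
  refine ⟨hf.1.const_smul c, ?_⟩
  have h := hf.2.const_mul ‖c‖
  rw [mul_zero] at h
  refine h.congr fun m => ?_
  rw [supDiff_smul, mul_assoc]

theorem MemCr.sub' [IsUltrametricDist E] {r : ℝ} {f g : (Fin d → ℤ_[p]) → E} (hf : MemCr E r f)
    (hg : MemCr E r g) : MemCr E r (f - g) := by
  have := hf.add' (hg.smul' (-1))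
  simpa [sub_eq_add_neg] using this

theorem MemCr.bdd1 {r : ℝ} {f : (Fin d → ℤ_[p]) → E} (hf : MemCr E r f) :
    BddAbove (Set.range fun x : Fin d → ℤ_[p] => ‖f x‖) := (isCompact_range hf.1.norm).bddAbove

theorem MemCr.bdd2 {r : ℝ} {f : (Fin d → ℤ_[p]) → E} (hf : MemCr E r f) :
    BddAbove (Set.range fun m : ℕ => supDiff E f m * (p : ℝ) ^ (r * (m : ℝ))) :=
  hf.2.bddAbove_range

theorem MemCr.le1 {r : ℝ} {f : (Fin d → ℤ_[p]) → E} (hf : MemCr E r f) (x) :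
    ‖f x‖ ≤ CrNorm E r f := (le_ciSup hf.bdd1 x).trans (le_max_left _ _)

theorem MemCr.le2 {r : ℝ} {f : (Fin d → ℤ_[p]) → E} (hf : MemCr E r f) (m : ℕ) :
    supDiff E f m * (p : ℝ) ^ (r * (m : ℝ)) ≤ CrNorm E r f :=
  (le_ciSup hf.bdd2 m).trans (le_max_right _ _)

theorem CrNorm_le {r : ℝ} {f : (Fin d → ℤ_[p]) → E} {C : ℝ} (h1 : ∀ x, ‖f x‖ ≤ C)
    (h2 : ∀ m : ℕ, supDiff E f m * (p : ℝ) ^ (r * (m : ℝ)) ≤ C) : CrNorm E r f ≤ C :=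
  max_le (ciSup_le h1) (ciSup_le h2)

theorem CrNorm_nonneg (r : ℝ) (f : (Fin d → ℤ_[p]) → E) : 0 ≤ CrNorm E r f :=
  (Real.iSup_nonneg fun _ => norm_nonneg _).trans (le_max_left _ _)

theorem supDiff_zero (m : ℕ) : supDiff E (0 : (Fin d → ℤ_[p]) → E) m = 0 := by
  simp [supDiff]

theorem Cr_complete [CompleteSpace E] [IsUltrametricDist E] (r : ℝ)
    (F : ℕ → ((Fin d → ℤ_[p]) → E)) (hF : ∀ n, MemCr E r (F n))
    (hC : ∀ ε : ℝ, 0 < ε → ∃ N : ℕ, ∀ i j : ℕ, N ≤ i → N ≤ j → CrNorm E r (F i - F j) < ε) :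
    ∃ f : (Fin d → ℤ_[p]) → E, MemCr E r f ∧
        Tendsto (fun n : ℕ => CrNorm E r (F n - f)) atTop (nhds 0) := by
  have hx : ∀ x, ∃ a, Tendsto (fun n => F n x) atTop (nhds a) := fun x => by
    refine cauchySeq_tendsto_of_complete (Metric.cauchySeq_iff.2 fun ε hε => ?_)
    obtain ⟨N, hN⟩ := hC ε hε
    refine ⟨N, fun i hi j hj => ?_⟩
    rw [dist_eq_norm]
    exact (((hF i).sub' (hF j)).le1 x).trans_lt (hN i j hi hj)
  choose f hf using hx
  have k1 : ∀ ε : ℝ, 0 < ε → ∃ N : ℕ, ∀ i, N ≤ i → (∀ x, ‖(F i - f) x‖ ≤ ε) ∧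
      ∀ m : ℕ, supDiff E (F i - f) m * (p : ℝ) ^ (r * (m : ℝ)) ≤ ε := by
    intro ε hε
    obtain ⟨N, hN⟩ := hC ε hε
    refine ⟨N, fun i hi => ⟨fun x => ?_, fun m => ?_⟩⟩
    · refine le_of_tendsto ((tendsto_const_nhds (x := F i x)).sub (hf x)).norm ?_
      filter_upwards [eventually_ge_atTop N] with j hj
      exact (((hF i).sub' (hF j)).le1 x).trans (hN i j hi hj).le
    · have hw : 0 < (p : ℝ) ^ (r * (m : ℝ)) :=
        Real.rpow_pos_of_pos (by exact_mod_cast (Fact.out : p.Prime).pos) _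
      rw [← le_div_iff₀ hw]
      refine supDiff_le fun x z => ?_
      refine le_of_tendsto (((tendsto_const_nhds (x := F i (x + (p : ℤ_[p]) ^ m • z))).sub
        (hf _)).sub ((tendsto_const_nhds (x := F i x)).sub (hf x))).norm ?_
      filter_upwards [eventually_ge_atTop N] with j hj
      rw [le_div_iff₀ hw]
      have h := (hF i).sub' (hF j)
      refine le_trans (mul_le_mul_of_nonneg_right (le_supDiff h.1 m x z) hw.le) ?_
      exact (h.le2 m).trans (hN i j hi hj).le
  have hcont : Continuous f := by
    have hu : TendstoUniformly F f atTop := by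
      rw [Metric.tendstoUniformly_iff]
      intro ε hε
      obtain ⟨N, hN⟩ := k1 (ε / 2) (half_pos hε)
      filter_upwards [eventually_ge_atTop N] with n hn x
      rw [dist_comm, dist_eq_norm]
      exact ((hN n hn).1 x).trans_lt (half_lt_self hε)
    exact hu.continuous (Frequently.of_forall fun n => (hF n).1)
  refine ⟨f, ⟨hcont, ?_⟩, ?_⟩
  · rw [Metric.tendsto_atTop]
    intro ε hε
    obtain ⟨N, hN⟩ := k1 (ε / 2) (half_pos hε)
    obtain ⟨M, hM⟩ := Metric.tendsto_atTop.1 (hF N).2 ε hε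
    refine ⟨M, fun m hm => ?_⟩
    have h1 := hM m hm
    have h2 := (hN N le_rfl).2 m
    have e : f = F N + (-1 : E) • (F N - f) := by ext x; simp
    have h3 := supDiff_add_wt (hF N).1 (((hF N).1.sub hcont).const_smul (-1 : E)) r m
    have h4 : supDiff E f m * (p : ℝ) ^ (r * (m : ℝ)) ≤
        max (supDiff E (F N) m * (p : ℝ) ^ (r * (m : ℝ)))
          (supDiff E ((-1 : E) • (F N - f)) m * (p : ℝ) ^ (r * (m : ℝ))) := by
      conv_lhs => rw [e]
      exact h3
    rw [supDiff_smul, norm_neg, norm_one, one_mul] at h4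
    rw [Real.dist_eq, sub_zero, abs_of_nonneg
      (mul_nonneg (supDiff_nonneg _ _) (wt_nonneg p r m))] at h1 ⊢
    exact h4.trans_lt (max_lt h1 (h2.trans_lt (half_lt_self hε)))
  · rw [Metric.tendsto_atTop]
    intro ε hε
    obtain ⟨N, hN⟩ := k1 (ε / 2) (half_pos hε)
    refine ⟨N, fun n hn => ?_⟩
    rw [Real.dist_eq, sub_zero, abs_of_nonneg (CrNorm_nonneg _ _)]
    exact (CrNorm_le (hN n hn).1 (hN n hn).2).trans_lt (half_lt_self hε)

end helpers

/-- For every `d ≥ 1` and `r ≥ 0`, `C^r(ℤ_p^d, E)` is an `E`-Banach space: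
it is an `E`-subspace of the space of functions `ℤ_p^d → E`; for `f ∈ C^r` the valuation
`v_{C^r}(f)` is finite (equivalently, the suprema defining `‖f‖_{C^r}` are over bounded sets);
`‖·‖_{C^r}` vanishes exactly at `0`, is non-archimedean and `E`-homogeneous; and the space is
complete for this norm. -/
theorem stmt2 (p : ℕ) [Fact p.Prime] (E : Type*) [NormedField E] [CompleteSpace E]
    [IsUltrametricDist E] [Algebra ℚ_[p] E] [FiniteDimensional ℚ_[p] E]
    (hE : ∀ x : ℚ_[p], ‖algebraMap ℚ_[p] E x‖ = ‖x‖)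
    (d : ℕ) (hd : 1 ≤ d) (r : ℝ) (hr : 0 ≤ r) :
    -- C^r is an E-subspace of the space of all functions ℤ_p^d → E
    (MemCr E r (0 : (Fin d → ℤ_[p]) → E)) ∧
    (∀ f g : (Fin d → ℤ_[p]) → E, MemCr E r f → MemCr E r g → MemCr E r (f + g)) ∧
    (∀ (c : E) (f : (Fin d → ℤ_[p]) → E), MemCr E r f → MemCr E r (c • f)) ∧
    -- the valuation v_{C^r}(f) is finite: both suprema defining ‖f‖_{C^r} are attained on
    -- bounded sets of reals
    (∀ f : (Fin d → ℤ_[p]) → E, MemCr E r f →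
      BddAbove (Set.range fun x : Fin d → ℤ_[p] => ‖f x‖) ∧
      BddAbove (Set.range fun m : ℕ => supDiff E f m * (p : ℝ) ^ (r * (m : ℝ)))) ∧
    -- ‖f‖_{C^r} = 0 iff f = 0 (i.e. v_{C^r}(f) = +∞ iff f = 0)
    (∀ f : (Fin d → ℤ_[p]) → E, MemCr E r f → (CrNorm E r f = 0 ↔ f = 0)) ∧
    -- ‖·‖_{C^r} is a non-archimedean norm
    (∀ f g : (Fin d → ℤ_[p]) → E, MemCr E r f → MemCr E r g →
      CrNorm E r (f + g) ≤ max (CrNorm E r f) (CrNorm E r g)) ∧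
    (∀ (c : E) (f : (Fin d → ℤ_[p]) → E), MemCr E r f →
      CrNorm E r (c • f) = ‖c‖ * CrNorm E r f) ∧
    -- completeness: every Cauchy sequence in C^r converges in C^r
    (∀ F : ℕ → ((Fin d → ℤ_[p]) → E), (∀ n, MemCr E r (F n)) →
      (∀ ε : ℝ, 0 < ε → ∃ N : ℕ, ∀ i j : ℕ, N ≤ i → N ≤ j → CrNorm E r (F i - F j) < ε) →
      ∃ f : (Fin d → ℤ_[p]) → E, MemCr E r f ∧
        Tendsto (fun n : ℕ => CrNorm E r (F n - f)) atTop (nhds 0)) := by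
  refine ⟨⟨continuous_const, ?_⟩, fun f g hf hg => hf.add' hg, fun c f hf => hf.smul' c,
    fun f hf => ⟨hf.bdd1, hf.bdd2⟩, fun f hf => ⟨fun h => ?_, ?_⟩, fun f g hf hg => ?_,
    fun c f hf => ?_, fun F hF hC => Cr_complete r F hF hC⟩
  · simp [supDiff_zero]
  · ext x
    exact norm_le_zero_iff.1 ((hf.le1 x).trans h.le)
  · rintro rfl
    simp [CrNorm, supDiff_zero]
  · refine CrNorm_le (fun x => ?_) fun m => ?_
    · exact (norm_add_le_max' _ _).trans (max_le_max (hf.le1 x) (hg.le1 x))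
    · exact (supDiff_add_wt hf.1 hg.1 r m).trans (max_le_max (hf.le2 m) (hg.le2 m))
  · unfold CrNorm
    rw [mul_max_of_nonneg _ _ (norm_nonneg c), Real.mul_iSup_of_nonneg (norm_nonneg c),
      Real.mul_iSup_of_nonneg (norm_nonneg c)]
    congr 1
    · simp only [Pi.smul_apply, smul_eq_mul, norm_mul]
    · simp only [supDiff_smul, mul_assoc]
end

section
/- Let d ≥ 1 and let r be a real number with 0 ≤ r < 1. For (i_1, …, i_d) ∈ ℕ^d set S(i_1, …, i_d) = (i_1 + p^{ℓ(i_1)} ℤ_p) × ⋯ × (i_d + p^{ℓ(i_d)} ℤ_p) and e_{(i_1,…,i_d)} = p^{max_{1 ≤ j ≤ d} ⌊ r·ℓ(i_j) ⌋} · 1_{S(i_1,…,i_d)}. Then the family (e_{(i_1,…,i_d)})_{(i_1,…,i_d) ∈ ℕ^d} is a Banach basis of C^r(ℤ_p^d, E) in the following sense: every f ∈ C^r(ℤ_p^d, E) has a unique expansion f = Σ_{(i_1,…,i_d) ∈ ℕ^d} c_{(i_1,…,i_d)} e_{(i_1,…,i_d)} with coefficients c_{(i_1,…,i_d)} ∈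 E tending to 0 along the filter of cofinite subsets of ℕ^d, the expansion converges in C^r(ℤ_p^d, E), and the valuation f ↦ inf v_p(c_{(i_1,…,i_d)}) is equivalent to v_{C^r} (defines the same topology). -/
open Filter Topology

/-- `ℓ(n)`: `ℓ(0) = 0`, and for `n ≥ 1`, `ℓ(n)` is the unique positive integer with
`p^{ℓ(n)-1} ≤ n < p^{ℓ(n)}`. -/
def ell (p n : ℕ) : ℕ := if n = 0 then 0 else Nat.log p n + 1

/-- `S(i_1, …, i_d) = (i_1 + p^{ℓ(i_1)} ℤ_p) × ⋯ × (i_d + p^{ℓ(i_d)} ℤ_p)`. -/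
def waveletSet (p : ℕ) [Fact p.Prime] {d : ℕ} (i : Fin d → ℕ) : Set (Fin d → ℤ_[p]) :=
  {x | ∀ j : Fin d, ∃ z : ℤ_[p], x j = ((i j : ℕ) : ℤ_[p]) + (p : ℤ_[p]) ^ (ell p (i j)) * z}

/-- `e_{(i_1,…,i_d)} = p^{max_j ⌊r·ℓ(i_j)⌋} · 1_{S(i_1,…,i_d)}`. -/
noncomputable def waveletFn (p : ℕ) [Fact p.Prime] (E : Type*) [NormedField E] {d : ℕ}
    (r : ℝ) (i : Fin d → ℕ) : (Fin d → ℤ_[p]) → E :=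
  fun x => (p : E) ^ (Finset.univ.sup fun j : Fin d => (⌊r * (ell p (i j) : ℝ)⌋).toNat) *
    Set.indicator (waveletSet p i) (fun _ => (1 : E)) x


namespace Wav

set_option linter.unusedSectionVars false

section defs
variable {p : ℕ} [Fact p.Prime] {E : Type*} [NormedField E] {d : ℕ}

def wt (E : Type*) [NormedField E] (n : ℕ) (b : Bool) : E :=
  if b then (if n = 0 then 0 else -1) else 1

def nd (p n : ℕ) (b : Bool) : ℕ := if b then n % p ^ (ell p n - 1) else n

noncomputable def coef (p : ℕ) [Fact p.Prime] (f : (Fin d → ℤ_[p]) → E) (k : Fin d → ℕ) : E :=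
  ∑ b : Fin d → Bool, (∏ j, wt E (k j) (b j)) * f (fun j => ((nd p (k j) (b j) : ℕ) : ℤ_[p]))

open Classical in
noncomputable def ind1 (p : ℕ) [Fact p.Prime] (E : Type*) [NormedField E] (k : ℕ) (x : ℤ_[p]) : E :=
  if (p : ℤ_[p]) ^ ell p k ∣ x - (k : ℤ_[p]) then 1 else 0

noncomputable def mx (p : ℕ) (r : ℝ) (i : Fin d → ℕ) : ℕ :=
  Finset.univ.sup fun j : Fin d => (⌊r * (ell p (i j) : ℝ)⌋).toNat

lemma mem_wav (i : Fin d → ℕ) (x : Fin d → ℤ_[p]) :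
    x ∈ waveletSet p i ↔ ∀ j, (p : ℤ_[p]) ^ ell p (i j) ∣ x j - (i j : ℤ_[p]) := by
  unfold waveletSet
  simp only [Set.mem_ofPred_eq, Dvd.dvd]
  refine forall_congr' fun j => exists_congr fun z => ?_
  constructor
  · intro h; rw [h]; ring
  · intro h; rw [← h]; ring

lemma wav_eq (r : ℝ) (i : Fin d → ℕ) (x : Fin d → ℤ_[p]) :
    waveletFn p E r i x = (p : E) ^ mx p r i * ∏ j, ind1 p E (i j) (x j) := by
  classical
  unfold waveletFn mx
  congr 1
  unfold ind1
  rw [Fintype.prod_boole, Set.indicator_apply]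
  simp only [mem_wav]
  congr

lemma dvd_nat (l a k : ℕ) : (p : ℤ_[p]) ^ l ∣ (a : ℤ_[p]) - (k : ℤ_[p]) ↔ a ≡ k [MOD p ^ l] := by
  have := PadicInt.pow_p_dvd_int_iff (p := p) l ((a : ℤ) - k)
  push_cast at this
  rw [this, Nat.ModEq.comm, Nat.modEq_iff_dvd]
  push_cast
  rfl

lemma lt_pow_ell (k : ℕ) : k < p ^ ell p k := by
  have hp := (Fact.out : p.Prime).one_lt
  unfold ell
  split_ifs with h
  · simp [h]
  · exact Nat.lt_pow_succ_log_self hp k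

lemma pow_ell_le {k : ℕ} (hk : k ≠ 0) : p ^ (ell p k - 1) ≤ k := by
  unfold ell
  simp only [hk, if_false, Nat.add_sub_cancel]
  exact Nat.pow_log_le_self p hk

lemma ell_pos {k : ℕ} (hk : k ≠ 0) : 1 ≤ ell p k := by
  unfold ell; simp [hk]

lemma le_of_lt_pow {k l : ℕ} (h : k < p ^ l) : ell p k ≤ l := by
  rcases eq_or_ne k 0 with rfl | hk
  · simp [ell]
  · have h1 := lt_of_le_of_lt (pow_ell_le (p := p) hk) h
    have := (Nat.pow_lt_pow_iff_right (Fact.out : p.Prime).one_lt).1 h1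
    omega

lemma nd_true_lt {k : ℕ} (hk : k ≠ 0) : nd p k true < p ^ (ell p k - 1) := by
  simp only [nd, if_true]
  exact Nat.mod_lt _ (pow_pos (Fact.out : p.Prime).pos _)

lemma nd_le (k : ℕ) (b : Bool) : nd p k b ≤ k := by
  cases b <;> simp [nd, Nat.mod_le]

lemma one_dim (i k : ℕ) :
    ∑ b : Bool, wt E i b * ind1 p E k (nd p i b : ℕ) = if i = k then 1 else 0 := by
  classical
  rw [Fintype.sum_bool]
  simp only [ind1, dvd_nat]
  rcases eq_or_ne i 0 with rfl | hi
  · have : (0 ≡ k [MOD p ^ ell p k]) ↔ 0 = k := by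
      constructor
      · intro h
        exact Nat.ModEq.eq_of_lt_of_lt h (pow_pos (Fact.out : p.Prime).pos _) (lt_pow_ell k)
      · rintro rfl; rfl
    simp [wt, nd, this]
  · rcases lt_or_ge (ell p k) (ell p i) with h | h
    · have hne : i ≠ k := by rintro rfl; exact lt_irrefl _ h
      have h1 : nd p i true ≡ i [MOD p ^ ell p k] := by
        have : nd p i true ≡ i [MOD p ^ (ell p i - 1)] := by
          simp only [nd, if_true]; exact Nat.mod_modEq _ _
        exact this.of_dvd (pow_dvd_pow _ (by omega))
      have h2 : (nd p i true ≡ k [MOD p ^ ell p k]) ↔ (i ≡ k [MOD p ^ ell p k]) :=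
        ⟨fun h => h1.symm.trans h, fun h => h1.trans h⟩
      simp only [h2, hne, if_false]
      simp only [wt, nd, hi, if_true, if_false, Bool.false_eq_true]
      split_ifs <;> simp
    · have hlt : i < p ^ ell p k :=
        lt_of_lt_of_le (lt_pow_ell i) (Nat.pow_le_pow_right (Fact.out : p.Prime).pos h)
      have h1 : (i ≡ k [MOD p ^ ell p k]) ↔ i = k :=
        ⟨fun h => Nat.ModEq.eq_of_lt_of_lt h hlt (lt_pow_ell k), fun h => h ▸ rfl⟩
      have h2 : ¬ (nd p i true ≡ k [MOD p ^ ell p k]) := by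
        intro hh
        have h3 := Nat.ModEq.eq_of_lt_of_lt hh (lt_of_le_of_lt (nd_le i true) hlt) (lt_pow_ell k)
        have h4 := le_of_lt_pow (nd_true_lt (p := p) hi)
        have h5 := ell_pos (p := p) hi
        rw [h3] at h4
        omega
      simp only [h2]
      simp [wt, nd, h1]

lemma coef_wav (r : ℝ) (i k : Fin d → ℕ) :
    coef p (waveletFn p E r i) k = if k = i then (p : E) ^ mx p r i else 0 := by
  classical
  unfold coef
  simp only [wav_eq]
  have : ∀ b : Fin d → Bool, (∏ j, wt E (k j) (b j)) * ((p : E) ^ mx p r i *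
      ∏ j, ind1 p E (i j) ((nd p (k j) (b j) : ℕ) : ℤ_[p])) = (p : E) ^ mx p r i *
      ∏ j, (wt E (k j) (b j) * ind1 p E (i j) ((nd p (k j) (b j) : ℕ) : ℤ_[p])) := by
    intro b; rw [Finset.prod_mul_distrib]; ring
  simp only [this]
  rw [← Finset.mul_sum, ← Fintype.piFinset_univ, ← Finset.prod_univ_sum (fun _ => Finset.univ)
    (fun j b => wt E (k j) b * ind1 p E (i j) ((nd p (k j) b : ℕ) : ℤ_[p]))]
  simp only [one_dim]
  rw [Fintype.prod_boole]
  simp [funext_iff]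

lemma coef_sub_sum (r : ℝ) (f : (Fin d → ℤ_[p]) → E) (c : (Fin d → ℕ) → E)
    (s : Finset (Fin d → ℕ)) (k : Fin d → ℕ) [Decidable (k ∈ s)] :
    coef p (f - fun x => ∑ i ∈ s, c i * waveletFn p E r i x) k =
      coef p f k - if k ∈ s then c k * (p : E) ^ mx p r k else 0 := by
  classical
  have : coef p (f - fun x => ∑ i ∈ s, c i * waveletFn p E r i x) k =
      coef p f k - ∑ i ∈ s, c i * coef p (waveletFn p E r i) k := by
    simp only [coef, Pi.sub_apply, mul_sub, Finset.sum_sub_distrib, Finset.mul_sum]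
    congr 1
    rw [Finset.sum_comm]
    refine Finset.sum_congr rfl fun i _ => Finset.sum_congr rfl fun b _ => by ring
  rw [this]
  simp only [coef_wav, mul_ite, mul_zero, Finset.sum_ite_eq]
  congr

lemma eq_zero_of_coef (g : (Fin d → ℤ_[p]) → E) (N n : Fin d → ℕ) (hn : n ≤ N)
    (h : ∀ k ≤ N, coef p g k = 0) : g (fun j => (n j : ℤ_[p])) = 0 := by
  classical
  induction n using WellFoundedLT.induction with
  | ind n ih =>
  have h0 := h n hn
  unfold coef at h0
  rw [Finset.sum_eq_single (fun _ => false)] at h0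
  · simpa [wt, nd] using h0
  · intro b _ hb
    by_cases hw : ∏ j, wt E (n j) (b j) = 0
    · rw [hw, zero_mul]
    · rw [ih (fun j => nd p (n j) (b j)), mul_zero]
      · refine lt_of_le_of_ne (fun j => nd_le _ _) ?_
        intro he
        apply hb
        funext j
        by_contra hbj
        have hbj : b j = true := by simpa using hbj
        have hj : wt E (n j) (b j) ≠ 0 := fun h => hw (Finset.prod_eq_zero (Finset.mem_univ j) h)
        have hnj : n j ≠ 0 := by
          intro h; rw [hbj] at hj; simp [wt, h] at hj
        have h1 := congrFun he j
        simp only [hbj] at h1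
        have h2 := nd_true_lt (p := p) hnj
        have h3 := pow_ell_le (p := p) hnj
        omega
      · exact le_trans (fun j => nd_le _ _) hn
  · simp

lemma expand (r : ℝ) (hp : (p : E) ≠ 0) (f : (Fin d → ℤ_[p]) → E) (N n : Fin d → ℕ) (hn : n ≤ N) :
    f (fun j => (n j : ℤ_[p])) = ∑ i ∈ Finset.Iic N,
      coef p f i * ∏ j, ind1 p E (i j) (n j : ℤ_[p]) := by
  classical
  have := eq_zero_of_coef (f - fun x => ∑ i ∈ Finset.Iic N,
    (coef p f i * ((p : E) ^ mx p r i)⁻¹) * waveletFn p E r i x) N n hn (by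
      intro k hk
      rw [coef_sub_sum]
      simp [hk, hp])
  rw [Pi.sub_apply, sub_eq_zero] at this
  rw [this]
  refine Finset.sum_congr rfl fun i _ => ?_
  rw [wav_eq]
  field_simp

end defs

section ana
variable {p : ℕ} [Fact p.Prime] {E : Type*} [NormedField E] [IsUltrametricDist E] {d : ℕ}

lemma cont_wav (r : ℝ) (i : Fin d → ℕ) : Continuous (waveletFn p E r i) := by
  classical
  have h1 : ∀ k : ℕ, Continuous (ind1 p E k) := by
    intro k
    apply IsLocallyConstant.continuous
    rw [IsLocallyConstant.iff_exists_open]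
    intro x
    refine ⟨Metric.closedBall x ((p : ℝ) ^ (-(ell p k : ℤ))), ?_, ?_, ?_⟩
    · apply IsUltrametricDist.isOpen_closedBall
      have : (0 : ℝ) < p := by exact_mod_cast (Fact.out : p.Prime).pos
      positivity
    · apply Metric.mem_closedBall_self
      positivity
    · intro y hy
      rw [mem_closedBall_iff_norm, PadicInt.norm_le_pow_iff_mem_span_pow,
        Ideal.mem_span_singleton] at hy
      unfold ind1
      have : ((p : ℤ_[p]) ^ ell p k ∣ y - k) ↔ ((p : ℤ_[p]) ^ ell p k ∣ x - k) := by
        have e : y - (k : ℤ_[p]) = (y - x) + (x - k) := by ring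
        rw [e, dvd_add_right hy]
      simp only [this]
  have : waveletFn p E r i = fun x => (p : E) ^ mx p r i * ∏ j, ind1 p E (i j) (x j) :=
    funext (wav_eq r i)
  rw [this]
  exact continuous_const.mul (continuous_finsetProd _ fun j _ => (h1 (i j)).comp (continuous_apply j))

lemma cont_sub (r : ℝ) {f : (Fin d → ℤ_[p]) → E} (hf : Continuous f) (c : (Fin d → ℕ) → E)
    (s : Finset (Fin d → ℕ)) : Continuous (f - fun x => ∑ i ∈ s, c i * waveletFn p E r i x) :=
  hf.sub (continuous_finsetSum _ fun i _ => continuous_const.mul (cont_wav r i))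

lemma bdd {f : (Fin d → ℤ_[p]) → E} (hf : Continuous f) : BddAbove (Set.range fun x => ‖f x‖) :=
  (isCompact_range hf.norm).bddAbove

lemma norm_wt (n : ℕ) (b : Bool) : ‖wt E n b‖ ≤ 1 := by
  unfold wt; split_ifs <;> simp

lemma norm_prod_wt (n : Fin d → ℕ) (b : Fin d → Bool) : ‖∏ j, wt E (n j) (b j)‖ ≤ 1 := by
  rw [norm_prod]
  exact Finset.prod_le_one (fun _ _ => norm_nonneg _) fun _ _ => norm_wt _ _

lemma coef_le_sup {f : (Fin d → ℤ_[p]) → E} (hf : Continuous f) (k : Fin d → ℕ) :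
    ‖coef p f k‖ ≤ ⨆ x, ‖f x‖ := by
  unfold coef
  refine IsUltrametricDist.norm_sum_le_of_forall_le_of_nonneg
    (Real.iSup_nonneg fun _ => norm_nonneg _) fun b _ => ?_
  rw [norm_mul]
  exact (mul_le_of_le_one_left (norm_nonneg _) (norm_prod_wt _ _)).trans (le_ciSup (bdd hf) _)

lemma le_supDiff {f : (Fin d → ℤ_[p]) → E} (hf : Continuous f) (m : ℕ) (x z : Fin d → ℤ_[p]) :
    ‖f (x + (p : ℤ_[p]) ^ m • z) - f x‖ ≤ supDiff E f m := by
  obtain ⟨B, hB⟩ := bdd hf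
  have hB : ∀ x, ‖f x‖ ≤ B := fun x => hB ⟨x, rfl⟩
  have h1 : ∀ x z : Fin d → ℤ_[p], ‖f (x + (p : ℤ_[p]) ^ m • z) - f x‖ ≤ B + B :=
    fun x z => (norm_sub_le _ _).trans (add_le_add (hB _) (hB _))
  unfold supDiff
  refine le_ciSup_of_le (f := fun x => ⨆ z : Fin d → ℤ_[p], ‖f (x + (p : ℤ_[p]) ^ m • z) - f x‖)
    ⟨B + B, ?_⟩ x ?_
  · rintro _ ⟨x, rfl⟩
    exact ciSup_le (h1 x)
  · refine le_ciSup (f := fun z : Fin d → ℤ_[p] => ‖f (x + (p : ℤ_[p]) ^ m • z) - f x‖)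
      ⟨B + B, ?_⟩ z
    rintro _ ⟨z, rfl⟩
    exact h1 x z

lemma coef_le_supDiff {f : (Fin d → ℤ_[p]) → E} (hf : Continuous f) (k : Fin d → ℕ) (j : Fin d)
    (hj : k j ≠ 0) : ‖coef p f k‖ ≤ supDiff E f (ell p (k j) - 1) := by
  classical
  have h0 : ∑ b : Fin d → Bool, (∏ i, wt E (k i) (b i)) *
      f (fun i => ((nd p (k i) (Function.update b j false i) : ℕ) : ℤ_[p])) = 0 := by
    refine Finset.sum_involution (fun b _ => Function.update b j (!(b j))) ?_ ?_ ?_ ?_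
    · intro b _
      rw [Function.update_idem, ← add_mul]
      suffices h : ∏ i, wt E (k i) (b i) + ∏ i, wt E (k i) (Function.update b j (!b j) i) = 0 by
        rw [h, zero_mul]
      rw [← Finset.mul_prod_erase _ _ (Finset.mem_univ j),
        ← Finset.mul_prod_erase _ (fun i => wt E (k i) (Function.update b j (!b j) i)) (Finset.mem_univ j)]
      rw [Finset.prod_congr rfl (g := fun i => wt E (k i) (b i)) (s₁ := Finset.univ.erase j)
        (f := fun i => wt E (k i) (Function.update b j (!b j) i)) (fun i hi => by
          rw [Function.update_of_ne (Finset.ne_of_mem_erase hi)])]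
      rw [← add_mul]
      cases h : b j <;> simp [wt, hj]
    · intro b _ _ h
      have := congrFun h j
      simp at this
    · intros; exact Finset.mem_univ _
    · intro b _; simp
  have h1 : coef p f k = ∑ b : Fin d → Bool, (∏ i, wt E (k i) (b i)) *
      (f (fun i => ((nd p (k i) (b i) : ℕ) : ℤ_[p])) -
      f (fun i => ((nd p (k i) (Function.update b j false i) : ℕ) : ℤ_[p]))) := by
    simp only [mul_sub, Finset.sum_sub_distrib, h0, sub_zero]
    rfl
  rw [h1]
  refine IsUltrametricDist.norm_sum_le_of_forall_le_of_nonneg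
    ((norm_nonneg _).trans (le_supDiff hf _ 0 0)) fun b _ => ?_
  rw [norm_mul]
  refine (mul_le_of_le_one_left (norm_nonneg _) (norm_prod_wt _ _)).trans ?_
  have h2 : (p : ℤ_[p]) ^ (ell p (k j) - 1) ∣
      ((nd p (k j) (b j) : ℕ) : ℤ_[p]) - ((nd p (k j) false : ℕ) : ℤ_[p]) := by
    rw [dvd_nat]
    cases b j
    · rfl
    · simp only [nd, if_true]
      exact Nat.mod_modEq _ _
  obtain ⟨z, hz⟩ := h2
  have h3 := le_supDiff hf (ell p (k j) - 1)
    (fun i => ((nd p (k i) (Function.update b j false i) : ℕ) : ℤ_[p])) (Pi.single j z)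
  refine le_of_eq_of_le ?_ h3
  congr 3
  funext i
  rcases eq_or_ne i j with rfl | hi
  · simp only [Pi.add_apply, Pi.smul_apply, Pi.single_eq_same, smul_eq_mul, ← hz,
      Function.update_self]
    ring
  · simp [hi]

lemma dense_nat : DenseRange (fun (n : Fin d → ℕ) (j : Fin d) => ((n j : ℕ) : ℤ_[p])) :=
  DenseRange.piMap fun _ => PadicInt.denseRange_natCast

lemma ell_le_mx {r : ℝ} (i : Fin d → ℕ) (j : Fin d) : r * ell p (i j) - 1 ≤ mx p r i := by
  have h1 : (⌊r * (ell p (i j) : ℝ)⌋).toNat ≤ mx p r i :=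
    Finset.le_sup (f := fun j : Fin d => (⌊r * (ell p (i j) : ℝ)⌋).toNat) (Finset.mem_univ j)
  have h2 : (⌊r * (ell p (i j) : ℝ)⌋ : ℝ) ≤ ((⌊r * (ell p (i j) : ℝ)⌋).toNat : ℝ) := by
    exact_mod_cast Int.self_le_toNat _
  have h3 := Int.sub_one_lt_floor (r * (ell p (i j) : ℝ))
  have h4 : ((⌊r * (ell p (i j) : ℝ)⌋).toNat : ℝ) ≤ mx p r i := by exact_mod_cast h1
  linarith

/-- either everything is trivial or the maximum is attained. -/
lemma mx_cases {r : ℝ} (hr : 0 ≤ r) (i : Fin d → ℕ) :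
    i = 0 ∧ mx p r i = 0 ∨
      ∃ j, i j ≠ 0 ∧ (∀ j', ell p (i j') ≤ ell p (i j)) ∧ (mx p r i : ℝ) ≤ r * ell p (i j) := by
  by_cases h : i = 0
  · left
    refine ⟨h, ?_⟩
    subst h
    unfold mx
    simp [ell]
  · right
    obtain ⟨j0, hj0⟩ := Function.ne_iff.1 h
    have : Nonempty (Fin d) := ⟨j0⟩
    obtain ⟨j, hj⟩ := Finite.exists_max (fun j => ell p (i j))
    refine ⟨j, ?_, hj, ?_⟩
    · intro h
      have h1 := hj j0
      have h2 := ell_pos (p := p) hj0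
      simp [ell, h] at h1 h2
      simp [h1] at hj0
    · have : mx p r i ≤ ⌊r * (ell p (i j) : ℝ)⌋.toNat := by
        refine Finset.sup_le fun j' _ => ?_
        apply Int.toNat_le_toNat
        apply Int.floor_le_floor
        have : (ell p (i j') : ℝ) ≤ ell p (i j) := by exact_mod_cast hj j'
        gcongr
      have h3 : (0 : ℝ) ≤ r * (ell p (i j) : ℝ) := by positivity
      have h4 : ((⌊r * (ell p (i j) : ℝ)⌋.toNat : ℕ) : ℝ) = (⌊r * (ell p (i j) : ℝ)⌋ : ℝ) := by
        exact_mod_cast Int.toNat_of_nonneg (Int.floor_nonneg.2 h3)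
      calc (mx p r i : ℝ) ≤ ((⌊r * (ell p (i j) : ℝ)⌋.toNat : ℕ) : ℝ) := by exact_mod_cast this
        _ ≤ _ := by rw [h4]; exact Int.floor_le _

lemma CrNorm_nonneg (r : ℝ) (f : (Fin d → ℤ_[p]) → E) : 0 ≤ CrNorm E r f :=
  le_max_of_le_left (Real.iSup_nonneg fun _ => norm_nonneg _)

lemma ind1_congr {k m : ℕ} (hk : ell p k ≤ m) {x y : ℤ_[p]} (h : (p : ℤ_[p]) ^ m ∣ x - y) :
    ind1 p E k x = ind1 p E k y := by
  unfold ind1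
  have : ((p : ℤ_[p]) ^ ell p k ∣ x - k) ↔ ((p : ℤ_[p]) ^ ell p k ∣ y - k) := by
    have e : x - (k : ℤ_[p]) = (x - y) + (y - k) := by ring
    rw [e, dvd_add_right ((pow_dvd_pow _ hk).trans h)]
  split_ifs with h1 h2 h2
  · rfl
  · exact absurd (this.1 h1) h2
  · exact absurd (this.2 h2) h1
  · rfl

lemma prod_ind1_mem (i : Fin d → ℕ) (x : Fin d → ℤ_[p]) :
    ∏ j, ind1 p E (i j) (x j) = 0 ∨ ∏ j, ind1 p E (i j) (x j) = 1 := by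
  classical
  unfold ind1
  rw [Fintype.prod_boole]
  split_ifs <;> simp

lemma norm_prod_ind1_sub (i : Fin d → ℕ) (x y : Fin d → ℤ_[p]) :
    ‖∏ j, ind1 p E (i j) (x j) - ∏ j, ind1 p E (i j) (y j)‖ ≤ 1 := by
  rcases prod_ind1_mem (E := E) i x with h | h <;> rcases prod_ind1_mem (E := E) i y with h' | h' <;>
    simp [h, h']

/-- the upper bound. -/
lemma upper {r : ℝ} (hr : 0 ≤ r) (hpE : ‖(p : E)‖ = (p : ℝ)⁻¹)
    {h : (Fin d → ℤ_[p]) → E} (hh : Continuous h)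
    {B : ℝ} (hB0 : 0 ≤ B) (hB : ∀ k, ‖coef p h k‖ ≤ B * (p : ℝ)⁻¹ ^ mx p r k) :
    CrNorm E r h ≤ p * B := by
  have hp1 : (1 : ℝ) < p := by exact_mod_cast (Fact.out : p.Prime).one_lt
  have hp0 : (0 : ℝ) < p := by linarith
  have hpne : (p : E) ≠ 0 := by
    intro h0; rw [h0, norm_zero] at hpE
    have : (0 : ℝ) < (p : ℝ)⁻¹ := by positivity
    linarith
  have hcB : ∀ k, ‖coef p h k‖ ≤ B := fun k => (hB k).trans
    (mul_le_of_le_one_right hB0 (pow_le_one₀ (by positivity) (inv_le_one_of_one_le₀ hp1.le)))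
  have h1 : ∀ x, ‖h x‖ ≤ B := by
    intro x
    refine dense_nat.induction_on (p := fun x => ‖h x‖ ≤ B) x
      (isClosed_le hh.norm continuous_const) fun n => ?_
    rw [expand r hpne h n n le_rfl]
    refine IsUltrametricDist.norm_sum_le_of_forall_le_of_nonneg hB0 fun i _ => ?_
    rw [norm_mul]
    refine (mul_le_of_le_one_right (norm_nonneg _) ?_).trans (hcB i)
    rcases prod_ind1_mem (E := E) i (fun j => (n j : ℤ_[p])) with h | h <;> simp [h]
  have h2 : ∀ (m : ℕ) (x z : Fin d → ℤ_[p]), ‖h (x + (p : ℤ_[p]) ^ m • z) - h x‖ ≤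
      p * B * (p : ℝ) ^ (-(r * m)) := by
    intro m x z
    have hnn : 0 ≤ p * B * (p : ℝ) ^ (-(r * m)) := by positivity
    refine DenseRange.induction_on₂ (e := fun (n : Fin d → ℕ) (j : Fin d) => ((n j : ℕ) : ℤ_[p]))
      (p := fun x z => ‖h (x + (p : ℤ_[p]) ^ m • z) - h x‖ ≤ p * B * (p : ℝ) ^ (-(r * m)))
      dense_nat ?_ (fun a b => ?_) x z
    · refine isClosed_le ?_ continuous_const
      have : Continuous fun q : (Fin d → ℤ_[p]) × (Fin d → ℤ_[p]) => q.1 + (p : ℤ_[p]) ^ m • q.2 := by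
        fun_prop
      exact ((hh.comp this).sub (hh.comp continuous_fst)).norm
    · have e : (fun j => ((a j : ℕ) : ℤ_[p])) + (p : ℤ_[p]) ^ m • (fun j => ((b j : ℕ) : ℤ_[p])) =
          fun j => (((a + p ^ m • b) j : ℕ) : ℤ_[p]) := by
        funext j; simp
      rw [e, expand r hpne h (a + p ^ m • b) (a + p ^ m • b) le_rfl,
        expand r hpne h (a + p ^ m • b) a (fun j => by simp), ← Finset.sum_sub_distrib]
      refine IsUltrametricDist.norm_sum_le_of_forall_le_of_nonneg hnn fun i _ => ?_
      rw [← mul_sub, norm_mul]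
      by_cases hm : ∀ j, ell p (i j) ≤ m
      · have : ∏ j, ind1 p E (i j) (((a + p ^ m • b) j : ℕ) : ℤ_[p]) =
            ∏ j, ind1 p E (i j) ((a j : ℕ) : ℤ_[p]) := by
          refine Finset.prod_congr rfl fun j _ => ind1_congr (hm j) ?_
          simp
        rw [this, sub_self, norm_zero, mul_zero]
        exact hnn
      · push Not at hm
        obtain ⟨j, hj⟩ := hm
        refine (mul_le_of_le_one_right (norm_nonneg _) (norm_prod_ind1_sub i _ _)).trans ?_
        refine (hB i).trans ?_
        rw [mul_comm (p : ℝ) B, mul_assoc]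
        refine mul_le_mul_of_nonneg_left ?_ hB0
        rw [inv_pow, ← Real.rpow_natCast, ← Real.rpow_neg hp0.le]
        calc (p : ℝ) ^ (-(mx p r i : ℝ)) ≤ (p : ℝ) ^ (1 + -(r * m)) := by
              apply Real.rpow_le_rpow_of_exponent_le hp1.le
              have h5 := ell_le_mx (p := p) (r := r) i j
              have h6 : (m : ℝ) ≤ ell p (i j) := by exact_mod_cast hj.le
              have h7 := mul_le_mul_of_nonneg_left h6 hr
              linarith
          _ = _ := by rw [Real.rpow_add hp0, Real.rpow_one]
  have hpB : 0 ≤ p * B := by positivity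
  unfold CrNorm
  refine max_le (Real.iSup_le (fun x => (h1 x).trans ?_) hpB) (Real.iSup_le (fun m => ?_) hpB)
  · exact le_mul_of_one_le_left hB0 hp1.le
  · have : supDiff E h m ≤ p * B * (p : ℝ) ^ (-(r * m)) := by
      have hnn : 0 ≤ p * B * (p : ℝ) ^ (-(r * m)) := by positivity
      exact Real.iSup_le (fun x => Real.iSup_le (fun z => h2 m x z) hnn) hnn
    calc _ ≤ p * B * (p : ℝ) ^ (-(r * m)) * (p : ℝ) ^ (r * m) := by gcongr
      _ = p * B := by
        rw [mul_assoc, ← Real.rpow_add hp0]; simp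

/-- the coefficient estimate. -/
lemma lower {r : ℝ} (hr : 0 ≤ r) (hr1 : r < 1)
    {f : (Fin d → ℤ_[p]) → E} (hf : Continuous f) (k : Fin d → ℕ) (j : Fin d) (hj : k j ≠ 0)
    (hm : (mx p r k : ℝ) ≤ r * ell p (k j)) :
    ‖coef p f k‖ * (p : ℝ) ^ mx p r k ≤
      p * (supDiff E f (ell p (k j) - 1) * (p : ℝ) ^ (r * ((ell p (k j) - 1 : ℕ) : ℝ))) := by
  have hp1 : (1 : ℝ) < p := by exact_mod_cast (Fact.out : p.Prime).one_lt
  have hp0 : (0 : ℝ) < p := by linarith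
  have h1 := coef_le_supDiff hf k j hj
  have h2 := ell_pos (p := p) hj
  have h3 : (p : ℝ) ^ mx p r k ≤ p * (p : ℝ) ^ (r * ((ell p (k j) - 1 : ℕ) : ℝ)) := by
    rw [← Real.rpow_natCast]
    calc (p : ℝ) ^ (mx p r k : ℝ) ≤ (p : ℝ) ^ (1 + r * ((ell p (k j) - 1 : ℕ) : ℝ)) := by
          apply Real.rpow_le_rpow_of_exponent_le hp1.le
          push_cast [h2]
          linarith
      _ = _ := by rw [Real.rpow_add hp0, Real.rpow_one]
  calc _ ≤ supDiff E f (ell p (k j) - 1) * (p * (p : ℝ) ^ (r * ((ell p (k j) - 1 : ℕ) : ℝ))) := by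
        gcongr
        exact (norm_nonneg _).trans h1
    _ = _ := by ring

lemma lower' {r : ℝ} (hr : 0 ≤ r) (hr1 : r < 1)
    {f : (Fin d → ℤ_[p]) → E} (hf : MemCr E r f) (k : Fin d → ℕ) :
    ‖coef p f k‖ * (p : ℝ) ^ mx p r k ≤ p * CrNorm E r f := by
  have hp1 : (1 : ℝ) < p := by exact_mod_cast (Fact.out : p.Prime).one_lt
  rcases mx_cases (p := p) hr k with ⟨_, h⟩ | ⟨j, hj, _, hm⟩
  · rw [h, pow_zero, mul_one]
    exact ((coef_le_sup hf.1 k).trans (le_max_left _ _)).trans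
      (le_mul_of_one_le_left (CrNorm_nonneg r f) hp1.le)
  · refine (lower hr hr1 hf.1 k j hj hm).trans ?_
    refine mul_le_mul_of_nonneg_left ?_ (by linarith)
    exact (le_ciSup hf.2.bddAbove_range (ell p (k j) - 1)).trans (le_max_right _ _)

lemma coef_tendsto {r : ℝ} (hr : 0 ≤ r) (hr1 : r < 1)
    {f : (Fin d → ℤ_[p]) → E} (hf : MemCr E r f) :
    Tendsto (fun k => ‖coef p f k‖ * (p : ℝ) ^ mx p r k) cofinite (nhds 0) := by
  have hp1 : (1 : ℝ) < p := by exact_mod_cast (Fact.out : p.Prime).one_lt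
  have hp0 : (0 : ℝ) < p := by linarith
  have ht : Tendsto (fun m : ℕ => p * (supDiff E f m * (p : ℝ) ^ (r * (m : ℝ)))) atTop (nhds 0) := by
    simpa using hf.2.const_mul (p : ℝ)
  rw [Metric.tendsto_nhds]
  intro ε hε
  obtain ⟨m0, hm0⟩ := eventually_atTop.1 (ht.eventually_lt_const hε)
  have hfin : (Set.Iic (fun _ : Fin d => p ^ (m0 + 1))).Finite := Set.finite_Iic _
  rw [Filter.eventually_cofinite]
  refine hfin.subset ?_
  intro k hk
  by_contra hk'
  apply hk
  have hk2 : ∃ j, p ^ (m0 + 1) < k j := by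
    by_contra hcon
    push Not at hcon
    exact hk' hcon
  obtain ⟨j', hj'⟩ := hk2
  rw [dist_zero_right, Real.norm_of_nonneg (by positivity)]
  rcases mx_cases (p := p) hr k with ⟨h, _⟩ | ⟨j, hj, hmax, hm⟩
  · rw [h] at hj'; simp at hj'
  · refine (lower hr hr1 hf.1 k j hj hm).trans_lt (hm0 _ ?_)
    have h1 := hj'.trans (lt_pow_ell (p := p) (k j'))
    have h2 := (Nat.pow_lt_pow_iff_right (Fact.out : p.Prime).one_lt).1 h1
    have := hmax j'
    omega

lemma coef_unique {r : ℝ} {f : (Fin d → ℤ_[p]) → E} (hf : Continuous f) (c : (Fin d → ℕ) → E)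
    (h : Tendsto (fun s : Finset (Fin d → ℕ) =>
            CrNorm E r (f - fun x => ∑ i ∈ s, c i * waveletFn p E r i x)) atTop (nhds 0))
    (k : Fin d → ℕ) : coef p f k = c k * (p : E) ^ mx p r k := by
  classical
  rw [← sub_eq_zero, ← norm_le_zero_iff]
  refine ge_of_tendsto h ?_
  filter_upwards [eventually_ge_atTop {k}] with s hs
  have hk : k ∈ s := hs (Finset.mem_singleton_self k)
  have := coef_le_sup (cont_sub r hf c s) k
  rw [coef_sub_sum, if_pos hk] at this
  exact this.trans (le_max_left _ _)

end ana

end Wav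

/-- For `d ≥ 1` and `0 ≤ r < 1`, the family `(e_{(i_1,…,i_d)})` indexed by
`ℕ^d` is a Banach basis of `C^r(ℤ_p^d, E)`: every `f ∈ C^r(ℤ_p^d, E)` has a unique expansion
`f = Σ c_i e_i` with coefficients tending to `0` along the cofinite filter on `ℕ^d` and with
the partial sums converging to `f` in `‖·‖_{C^r}`; moreover the valuation
`f ↦ inf_i v_p(c_i)` is equivalent to `v_{C^r}` (the two norms define the same topology). -/
theorem stmt4 (p : ℕ) [Fact p.Prime] (E : Type*) [NormedField E] [CompleteSpace E]
    [IsUltrametricDist E] [Algebra ℚ_[p] E] [FiniteDimensional ℚ_[p] E]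
    (hE : ∀ x : ℚ_[p], ‖algebraMap ℚ_[p] E x‖ = ‖x‖)
    (d : ℕ) (hd : 1 ≤ d) (r : ℝ) (hr0 : 0 ≤ r) (hr1 : r < 1) :
    (∀ f : (Fin d → ℤ_[p]) → E, MemCr E r f →
      ∃! c : (Fin d → ℕ) → E,
        Tendsto c cofinite (nhds 0) ∧
        Tendsto (fun s : Finset (Fin d → ℕ) =>
            CrNorm E r (f - fun x => ∑ i ∈ s, c i * waveletFn p E r i x))
          atTop (nhds 0)) ∧
    (∃ C₁ C₂ : ℝ, 0 < C₁ ∧ 0 < C₂ ∧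
      ∀ (f : (Fin d → ℤ_[p]) → E) (c : (Fin d → ℕ) → E), MemCr E r f →
        Tendsto c cofinite (nhds 0) →
        Tendsto (fun s : Finset (Fin d → ℕ) =>
            CrNorm E r (f - fun x => ∑ i ∈ s, c i * waveletFn p E r i x))
          atTop (nhds 0) →
        C₁ * (⨆ i : Fin d → ℕ, ‖c i‖) ≤ CrNorm E r f ∧
          CrNorm E r f ≤ C₂ * (⨆ i : Fin d → ℕ, ‖c i‖)) := by
  classical
  have hp1 : (1 : ℝ) < p := by exact_mod_cast (Fact.out : p.Prime).one_lt
  have hp0 : (0 : ℝ) < p := by linarith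
  have hpE : ‖(p : E)‖ = (p : ℝ)⁻¹ := by
    have := hE (p : ℚ_[p])
    rw [map_natCast] at this
    rw [this, Padic.norm_p]
  have hpne : (p : E) ≠ 0 := by
    intro h0; rw [h0, norm_zero] at hpE
    have : (0 : ℝ) < (p : ℝ)⁻¹ := by positivity
    linarith
  refine ⟨fun f hf => ?_, (p : ℝ)⁻¹, p, by positivity, hp0, fun f c hf hc hs => ?_⟩
  · have hnorm : ∀ k, ‖Wav.coef p f k * ((p : E) ^ Wav.mx p r k)⁻¹‖ =
        ‖Wav.coef p f k‖ * (p : ℝ) ^ Wav.mx p r k := by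
      intro k
      rw [norm_mul, norm_inv, norm_pow, hpE, inv_pow, inv_inv]
    have hten := Wav.coef_tendsto hr0 hr1 hf
    refine ⟨fun k => Wav.coef p f k * ((p : E) ^ Wav.mx p r k)⁻¹, ⟨?_, ?_⟩, ?_⟩
    · rw [tendsto_zero_iff_norm_tendsto_zero]
      simp only [hnorm]
      exact hten
    · rw [Metric.tendsto_nhds]
      intro ε hε
      have hε' : 0 < ε / (2 * p) := by positivity
      have hfin := Filter.eventually_cofinite.1 (hten.eventually_lt_const hε')
      filter_upwards [eventually_ge_atTop hfin.toFinset] with s hs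
      rw [dist_zero_right, Real.norm_of_nonneg (Wav.CrNorm_nonneg _ _)]
      refine (Wav.upper hr0 hpE (Wav.cont_sub r hf.1 _ s) hε'.le fun k => ?_).trans_lt ?_
      · rw [Wav.coef_sub_sum]
        by_cases hk : k ∈ s
        · rw [if_pos hk, mul_assoc, inv_mul_cancel₀ (pow_ne_zero _ hpne), mul_one, sub_self, norm_zero]
          positivity
        · rw [if_neg hk, sub_zero]
          have h1 : ‖Wav.coef p f k‖ * (p : ℝ) ^ Wav.mx p r k < ε / (2 * p) := by
            by_contra hcon
            exact hk (hs (hfin.mem_toFinset.2 hcon))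
          rw [inv_pow, ← div_eq_mul_inv, le_div_iff₀ (by positivity)]
          exact h1.le
      · have : (p : ℝ) * (ε / (2 * p)) = ε / 2 := by field_simp
        rw [this]; linarith
    · rintro c ⟨_, hc2⟩
      funext k
      rw [Wav.coef_unique hf.1 c hc2 k, mul_assoc, mul_inv_cancel₀ (pow_ne_zero _ hpne), mul_one]
  · have hcoef := Wav.coef_unique hf.1 c hs
    have hn : ∀ k, ‖Wav.coef p f k‖ * (p : ℝ) ^ Wav.mx p r k = ‖c k‖ := by
      intro k
      rw [hcoef k, norm_mul, norm_pow, hpE, mul_assoc, inv_pow, inv_mul_cancel₀ (by positivity), mul_one]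
    have hbd : BddAbove (Set.range fun i => ‖c i‖) := by
      have := (tendsto_zero_iff_norm_tendsto_zero.1 hc)
      exact this.bddAbove_range_of_cofinite
    constructor
    · rw [inv_mul_le_iff₀ hp0]
      refine Real.iSup_le (fun k => ?_) (mul_nonneg hp0.le (Wav.CrNorm_nonneg _ _))
      rw [← hn k]
      exact Wav.lower' hr0 hr1 hf k
    · refine Wav.upper hr0 hpE hf.1 (Real.iSup_nonneg fun _ => norm_nonneg _) fun k => ?_
      rw [inv_pow, ← div_eq_mul_inv, le_div_iff₀ (by positivity), hn k]
      exact le_ciSup hbd k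
end
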